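/- arXiv:2208.06862 — 2 statements merged into one kernel-verified Lean document; each statement's English description precedes it below -/
import Mathlib

section
/- Let p be an odd prime and let Λ = ℤ_p⟦T⟧ be the ring of formal power series over the p-adic integers. Let X be a finitely generated torsion Λ-module containing no nonzero finite Λ-submodules. Then μ(X) + λ(X) ≥ g(X), where λ(X) denotes the ℤ_p-rank of X, μ(X) denotes the sum over i ≥ 0 of the torsion-free ranks of the 𝔽_p⟦T⟧-modules p^i X / p^{i+1} X, and g(X) denotes the dimension of X/𝔐X over the residue field Λ/𝔐 ≅ 𝔽_p, with 𝔐 = (p, T) the maximal ideal of Λ. -/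
open Pointwise TensorProduct

set_option synthInstance.maxHeartbeats 1000000
set_option maxHeartbeats 1000000

/-- The Iwasawa algebra `Λ = ℤ_p⟦T⟧`. -/
noncomputable abbrev IwasawaAlgebra (p : ℕ) [Fact p.Prime] : Type :=
  PowerSeries ℤ_[p]

/-- The maximal ideal `𝔐 = (p, T)` of `Λ`. -/
noncomputable def maxIdeal (p : ℕ) [Fact p.Prime] : Ideal (IwasawaAlgebra p) :=
  Ideal.span {(p : IwasawaAlgebra p), PowerSeries.X}

/-- `Ω = Λ/pΛ ≅ 𝔽_p⟦T⟧`. -/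
noncomputable abbrev OmegaAlgebra (p : ℕ) [Fact p.Prime] : Type :=
  IwasawaAlgebra p ⧸ Ideal.span {(p : IwasawaAlgebra p)}

/-- the submodule `p^i X` of a `Λ`-module `X`. -/
noncomputable def pPowSub (p : ℕ) [Fact p.Prime] (X : Type) [AddCommGroup X]
    [Module (IwasawaAlgebra p) X] (i : ℕ) : Submodule (IwasawaAlgebra p) X :=
  (p : IwasawaAlgebra p) ^ i • ⊤

/-- the quotient `p^i X / p^{i+1} X`, a module over `Ω = Λ/pΛ`. -/
noncomputable abbrev pGraded (p : ℕ) [Fact p.Prime] (X : Type) [AddCommGroup X]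
    [Module (IwasawaAlgebra p) X] (i : ℕ) : Type :=
  (pPowSub p X i) ⧸
    (Ideal.span {(p : IwasawaAlgebra p)} • (⊤ : Submodule (IwasawaAlgebra p) (pPowSub p X i)))

/-- `μ(X) = Σ_i rank_{Ω}(p^i X / p^{i+1} X)`, the rank over the domain `Ω` being the
dimension over its fraction field after base change. -/
noncomputable def muInv (p : ℕ) [Fact p.Prime] (X : Type) [AddCommGroup X]
    [Module (IwasawaAlgebra p) X] : Cardinal :=
  Cardinal.sum fun i : ℕ =>
    Module.rank (FractionRing (OmegaAlgebra p))
      (FractionRing (OmegaAlgebra p) ⊗[OmegaAlgebra p] pGraded p X i)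

/-- `λ(X) = dim_{ℚ_p}(X ⊗_{ℤ_p} ℚ_p)`, the `ℤ_p`-rank of `X`. -/
noncomputable def lambdaInv (p : ℕ) [Fact p.Prime] (X : Type) [AddCommGroup X]
    [Module ℤ_[p] X] : Cardinal :=
  Module.rank ℚ_[p] (ℚ_[p] ⊗[ℤ_[p]] X)

/-- `g(X) = dim_{Λ/𝔐}(X/𝔐X)`. -/
noncomputable def gInv (p : ℕ) [Fact p.Prime] (X : Type) [AddCommGroup X]
    [Module (IwasawaAlgebra p) X] : Cardinal :=
  Module.rank (IwasawaAlgebra p ⧸ maxIdeal p)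
    (X ⧸ (maxIdeal p • (⊤ : Submodule (IwasawaAlgebra p) X)))

/-!
Filter `X` by the submodules `p ^ i X`. Multiplication by `p` maps `p ^ i X` onto `p ^ (i + 1) X`
with kernel `(p ^ i X)[p]`, so the minimal number of generators of `X` is at most the sum of those
of the kernels with `i < k` and of `p ^ k X`. Take `k` such that some `s ∉ (p)` kills `p ^ k X`.

* As `X` has no nonzero finite submodule, `(p ^ i X)[p]` is torsion-free, hence free, over the
  principal ideal domain `Ω = Λ / p ≅ 𝔽_p⟦T⟧`. For a module `M` killed by `p ^ k s`, the Euler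
  characteristic of multiplication by `p` is nonnegative: `rank_Ω M[p] ≤ rank_Ω (M / p M)`. So the
  kernels contribute at most `μ(X)`.
* By Weierstrass division `p ^ k X` is finitely generated over `ℤ_p`. Its `p`-torsion is killed by
  `s` but torsion-free over `Ω`, hence zero. So `p ^ k X` is free over `ℤ_p` and contributes at most
  `λ(X)`.
-/

open IsLocalRing Submodule
open scoped PowerSeries

universe u

theorem le_sum_add_of_le_add_succ {c r : ℕ → Cardinal.{u}} (h : ∀ i, c i ≤ r i + c (i + 1))
    (n : ℕ) : c 0 ≤ Cardinal.sum r + c n := by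
  induction n generalizing c r with
  | zero => exact self_le_add_left _ _
  | succ n ih =>
    calc c 0 ≤ r 0 + c 1 := h 0
      _ ≤ r 0 + (Cardinal.sum (fun i ↦ r (i + 1)) + c (n + 1)) := by
        gcongr
        exact ih (c := fun i ↦ c (i + 1)) fun i ↦ h (i + 1)
      _ = Cardinal.sum r + c (n + 1) := by rw [← add_assoc, ← Cardinal.sum_nat_eq_add_sum_succ]

section Rank

theorem rank_le_rank_of_comp_eq_zero {S : Type*} [Ring S] [HasRankNullity.{u} S] {M N P : Type u}
    [AddCommGroup M] [AddCommGroup N] [AddCommGroup P] [Module S M] [Module S N] [Module S P]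
    {f : M →ₗ[S] N} {g : N →ₗ[S] P} (hgf : g ∘ₗ f = 0) (hg : Function.Surjective g)
    (hf : Module.rank S (LinearMap.ker f) ≤ Module.rank S P) :
    Module.rank S M ≤ Module.rank S N :=
  calc Module.rank S M
      = Module.rank S (LinearMap.range f) + Module.rank S (LinearMap.ker f) :=
        f.rank_range_add_rank_ker.symm
    _ ≤ Module.rank S (LinearMap.ker g) + Module.rank S P :=
        add_le_add (rank_mono (LinearMap.range_le_ker_iff.2 hgf)) hf
    _ = Module.rank S N := by
        rw [← g.rank_range_add_rank_ker, rank_range_of_surjective g hg, add_comm]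

theorem rank_eq_zero_of_isTorsionBy {S M : Type*} [CommRing S] [AddCommGroup M]
    [Module S M] {r : S} (hr : r ≠ 0) (h : Module.IsTorsionBy S M r) : Module.rank S M = 0 :=
  rank_eq_zero_iff.2 fun x ↦ ⟨r, hr, @h x⟩

theorem rank_tensorProduct_of_isFractionRing (R : Type*) [CommRing R] (K M : Type u) [Field K]
    [Algebra R K] [IsFractionRing R K] [AddCommGroup M] [Module R M] :
    Module.rank K (K ⊗[R] M) = Module.rank R M := by
  rw [IsLocalization.rank_eq K (nonZeroDivisors R) le_rfl]
  exact IsLocalizedModule.rank_eq (nonZeroDivisors R) le_rfl (TensorProduct.mk R K M 1)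

variable {R : Type*} [CommRing R]

/-- The map `M / I M → N / I N` induced by a linear map `f : M → N`, as a map of
`R ⧸ I`-modules. -/
def quotientSMulTopMap (I : Ideal R) {M N : Type*} [AddCommGroup M] [AddCommGroup N] [Module R M]
    [Module R N] (f : M →ₗ[R] N) :
    (M ⧸ (I • ⊤ : Submodule R M)) →ₗ[R ⧸ I] (N ⧸ (I • ⊤ : Submodule R N)) :=
  (mapQ _ _ f (smul_top_le_comap_smul_top I f)).extendScalarsOfSurjective
    Ideal.Quotient.mk_surjective

theorem quotientSMulTopMap_surjective (I : Ideal R) {M N : Type*} [AddCommGroup M]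
    [AddCommGroup N] [Module R M] [Module R N] {f : M →ₗ[R] N} (hf : Function.Surjective f) :
    Function.Surjective (quotientSMulTopMap I f) := by
  refine (mkQ_surjective _).forall.2 fun y ↦ ?_
  obtain ⟨x, rfl⟩ := hf y
  exact ⟨mkQ _ x, rfl⟩

variable (a : R) (M : Type*) [AddCommGroup M] [Module R M]

/-- The natural map `M[a] → M / a M`, as a map of `R ⧸ (a)`-modules. -/
def torsionByToQuotient :
    torsionBy R M a →ₗ[R ⧸ Ideal.span {a}] M ⧸ (Ideal.span {a} • ⊤ : Submodule R M) :=
  (mkQ _ ∘ₗ (torsionBy R M a).subtype).extendScalarsOfSurjective Ideal.Quotient.mk_surjective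

theorem quotientSMulTopMap_comp_torsionByToQuotient :
    quotientSMulTopMap (Ideal.span {a}) (LinearMap.lsmul R M a).rangeRestrict ∘ₗ
      torsionByToQuotient a M = 0 := by
  ext x
  have hx : (LinearMap.lsmul R M a).rangeRestrict x = 0 := Subtype.ext x.2
  exact congrArg (mkQ _) hx

theorem rank_ker_torsionByToQuotient_le :
    Module.rank (R ⧸ Ideal.span {a}) (LinearMap.ker (torsionByToQuotient a M)) ≤
      Module.rank (R ⧸ Ideal.span {a})
        (torsionBy R (LinearMap.range (LinearMap.lsmul R M a)) a) := by
  have hmem (x : LinearMap.ker (torsionByToQuotient a M)) :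
      (x : M) ∈ LinearMap.range (LinearMap.lsmul R M a) := by
    have hx : (x : M) ∈ (Ideal.span {a} • ⊤ : Submodule R M) :=
      (Submodule.Quotient.mk_eq_zero _).1 x.2
    simpa [ideal_span_singleton_smul, mem_smul_pointwise_iff_exists] using hx
  let toTorsionBy : LinearMap.ker (torsionByToQuotient a M) →ₗ[R]
      torsionBy R (LinearMap.range (LinearMap.lsmul R M a)) a :=
    { toFun x := ⟨⟨x, hmem x⟩, Subtype.ext x.1.2⟩
      map_add' _ _ := rfl
      map_smul' _ _ := rfl }
  refine LinearMap.rank_le_of_injective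
    (toTorsionBy.extendScalarsOfSurjective Ideal.Quotient.mk_surjective) fun x y hxy ↦ ?_
  exact Subtype.ext (Subtype.ext (congrArg
    (fun z : torsionBy R (LinearMap.range (LinearMap.lsmul R M a)) a ↦ (z : M)) hxy))

theorem rank_torsionBy_le_rank_quotient [IsDomain (R ⧸ Ideal.span {a})] {s : R} (hs : ¬a ∣ s)
    (k : ℕ) (h : Module.IsTorsionBy R M (a ^ k * s)) :
    Module.rank (R ⧸ Ideal.span {a}) (torsionBy R M a) ≤
      Module.rank (R ⧸ Ideal.span {a}) (M ⧸ (Ideal.span {a} • ⊤ : Submodule R M)) := by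
  induction k generalizing M with
  | zero =>
    have hs' : Ideal.Quotient.mk (Ideal.span {a}) s ≠ 0 := by
      rwa [Ne, Ideal.Quotient.eq_zero_iff_mem, Ideal.mem_span_singleton]
    have htors : Module.IsTorsionBy (R ⧸ Ideal.span {a}) (torsionBy R M a)
        (Ideal.Quotient.mk _ s) := fun x ↦ Subtype.ext (by simpa using @h x)
    rw [rank_eq_zero_of_isTorsionBy hs' htors]
    exact zero_le
  | succ k ih =>
    have hrange : Module.IsTorsionBy R (LinearMap.range (LinearMap.lsmul R M a)) (a ^ k * s) := by
      rintro ⟨_, x, rfl⟩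
      ext
      simpa [smul_smul, pow_succ, mul_right_comm] using @h x
    exact rank_le_rank_of_comp_eq_zero (quotientSMulTopMap_comp_torsionByToQuotient a M)
      (quotientSMulTopMap_surjective _ (LinearMap.lsmul R M a).surjective_rangeRestrict)
      ((rank_ker_torsionByToQuotient_le a M).trans (ih _ hrange))

end Rank

section Torsion

theorem finite_of_isTorsionBySet {R S M : Type*} [CommRing R] [CommRing S] [Algebra R S]
    [AddCommGroup M] [Module R M] [Module S M] [IsScalarTower R S M] [Module.Finite S M]
    {I : Ideal S} [Module.Finite R (S ⧸ I)] (h : Module.IsTorsionBySet S M I) :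
    Module.Finite R M := by
  let : Module (S ⧸ I) M := h.module
  have : IsScalarTower S (S ⧸ I) M := h.isScalarTower
  have : IsScalarTower R (S ⧸ I) M := h.isScalarTower
  have : Module.Finite (S ⧸ I) M := .of_restrictScalars_finite S _ _
  exact .trans (S ⧸ I) M

theorem finite_of_isTorsionBySet_of_finite_quotient {R M : Type*} [CommRing R] [AddCommGroup M]
    [Module R M] [Module.Finite R M] {I : Ideal R} [Finite (R ⧸ I)]
    (h : Module.IsTorsionBySet R M I) : Finite M := by
  let : Module (R ⧸ I) M := h.module
  have : IsScalarTower R (R ⧸ I) M := h.isScalarTower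
  have : Module.Finite (R ⧸ I) M := .of_restrictScalars_finite R _ _
  exact Module.finite_of_finite (R ⧸ I)

theorem isTorsionFree_of_isSMulRegular_irreducible {A M : Type*} [CommRing A] [IsDomain A]
    [IsDiscreteValuationRing A] [AddCommGroup M] [Module A M] {ϖ : A} (hϖ : Irreducible ϖ)
    (h : IsSMulRegular M ϖ) : Module.IsTorsionFree A M where
  isSMulRegular r hr := by
    obtain ⟨n, u, rfl⟩ := IsDiscreteValuationRing.eq_unit_mul_pow_irreducible hr.ne_zero hϖ
    exact (u.isUnit.isSMulRegular M).mul (h.pow n)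

theorem isTorsionFree_torsionBy_submodule {R M : Type*} [CommRing R]
    [AddCommGroup M] [Module R M] {a : R}
    [Module.IsTorsionFree (R ⧸ Ideal.span {a}) (torsionBy R M a)] (N : Submodule R M) :
    Module.IsTorsionFree (R ⧸ Ideal.span {a}) (torsionBy R N a) := by
  let incl : torsionBy R N a → torsionBy R M a := fun x ↦ ⟨x, congrArg Subtype.val x.2⟩
  refine Function.Injective.moduleIsTorsionFree incl (fun x y hxy ↦ ?_) ?_
  · exact Subtype.ext (Subtype.ext (congrArg (fun z : torsionBy R M a ↦ (z : M)) hxy))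
  · exact Ideal.Quotient.mk_surjective.forall.2 fun _ _ ↦ rfl

theorem isSMulRegular_of_isTorsionBy_of_not_dvd {R M : Type*} [CommRing R] [AddCommGroup M]
    [Module R M] {a s : R} [IsDomain (R ⧸ Ideal.span {a})]
    [Module.IsTorsionFree (R ⧸ Ideal.span {a}) (torsionBy R M a)] (hs : ¬a ∣ s)
    (h : Module.IsTorsionBy R M s) : IsSMulRegular M a := by
  refine .of_right_eq_zero_of_smul fun x hx ↦ ?_
  have hs' : Ideal.Quotient.mk (Ideal.span {a}) s ≠ 0 := by
    rwa [Ne, Ideal.Quotient.eq_zero_iff_mem, Ideal.mem_span_singleton]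
  have hsx : Ideal.Quotient.mk (Ideal.span {a}) s • (⟨x, hx⟩ : torsionBy R M a) = 0 :=
    Subtype.ext (@h x)
  exact congrArg Subtype.val ((smul_eq_zero_iff_right hs').1 hsx)

theorem exists_isTorsionBy_pow_mul {R M : Type*} [CommRing R] [IsDomain R] [WfDvdMonoid R]
    [AddCommGroup M] [Module R M] [Module.Finite R M] (h : Module.IsTorsion R M) {a : R}
    (ha : ¬IsUnit a) : ∃ (k : ℕ) (s : R), ¬a ∣ s ∧ Module.IsTorsionBy R M (a ^ k * s) := by
  obtain ⟨f, hf, hf0⟩ := annihilator_top_inter_nonZeroDivisors h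
  obtain ⟨s, hf_eq, hs⟩ := (FiniteMultiplicity.of_not_isUnit ha
    (nonZeroDivisors.ne_zero hf0)).exists_eq_pow_mul_and_not_dvd
  exact ⟨_, s, hs, fun x ↦ hf_eq ▸ mem_annihilator.1 hf x trivial⟩

end Torsion

section SpanRank

theorem spanRank_top_le_spanRank_ker_add_spanRank_range {R : Type*} {M N : Type u} [Ring R]
    [AddCommGroup M] [AddCommGroup N] [Module R M] [Module R N] (f : M →ₗ[R] N) :
    (⊤ : Submodule R M).spanRank ≤
      (LinearMap.ker f).spanRank + (LinearMap.range f).spanRank := by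
  obtain ⟨t, ht, hspan⟩ := (LinearMap.range f).exists_span_set_card_eq_spanRank
  have hsurj : Set.SurjOn f Set.univ t := fun y hy ↦ by
    have hy' : y ∈ LinearMap.range f := hspan ▸ subset_span hy
    simpa using hy'
  obtain ⟨s, -, hs⟩ := hsurj.exists_bijOn_subset
  have htop : LinearMap.ker f ⊔ span R s = ⊤ := by
    rw [sup_comm, ← comap_map_eq, map_span, hs.image_eq, hspan, LinearMap.range_eq_map,
      comap_map_eq, top_sup_eq]
  calc (⊤ : Submodule R M).spanRank
      ≤ (LinearMap.ker f).spanRank + (span R s).spanRank := htop ▸ spanRank_sup_le_sum_spanRank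
    _ ≤ (LinearMap.ker f).spanRank + (LinearMap.range f).spanRank := by
      gcongr
      rw [← ht, ← Cardinal.mk_congr (hs.equiv f)]
      exact spanRank_span_le_card s

theorem spanRank_top_le_rank {R S M : Type*} [CommRing R] [StrongRankCondition R] [Ring S]
    [Algebra R S] [AddCommGroup M] [Module R M] [Module S M] [IsScalarTower R S M]
    [Module.Free R M] : (⊤ : Submodule S M).spanRank ≤ Module.rank R M :=
  (le_spanRank_restrictScalars (R := R) ⊤).trans_eq rank_eq_spanRank_of_free.symm

variable {R : Type*} [CommRing R]

theorem rank_quotient_smul_top_le_spanRank (I : Ideal R) [Nontrivial (R ⧸ I)] (M : Type*)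
    [AddCommGroup M] [Module R M] :
    Module.rank (R ⧸ I) (M ⧸ (I • ⊤ : Submodule R M)) ≤ (⊤ : Submodule R M).spanRank :=
  calc Module.rank (R ⧸ I) (M ⧸ (I • ⊤ : Submodule R M))
      ≤ (⊤ : Submodule (R ⧸ I) (M ⧸ (I • ⊤ : Submodule R M))).spanRank := rank_le_spanRank
    _ ≤ (⊤ : Submodule R (M ⧸ (I • ⊤ : Submodule R M))).spanRank :=
        le_spanRank_restrictScalars (R := R) ⊤
    _ ≤ (⊤ : Submodule R M).spanRank := by
        simpa using spanRank_range_le (mkQ (I • ⊤ : Submodule R M))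

variable {a : R} [IsDomain (R ⧸ Ideal.span {a})] [IsPrincipalIdealRing (R ⧸ Ideal.span {a})]
  {M : Type*} [AddCommGroup M] [Module R M] [IsNoetherian R M]
  [Module.IsTorsionFree (R ⧸ Ideal.span {a}) (torsionBy R M a)]

theorem spanRank_torsionBy_le_rank :
    (torsionBy R M a).spanRank ≤ Module.rank (R ⧸ Ideal.span {a}) (torsionBy R M a) := by
  have : Module.Finite (R ⧸ Ideal.span {a}) (torsionBy R M a) := .of_restrictScalars_finite R _ _
  rw [← spanRank_top, rank_eq_spanRank_of_free]
  exact (spanRank_restrictScalars_eq (R := R) Ideal.Quotient.mk_surjective ⊤).le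

theorem spanRank_le_rank_quotient_add_spanRank_smul {s : R} (hs : ¬a ∣ s) {k : ℕ}
    (h : Module.IsTorsionBy R M (a ^ k * s)) (N : Submodule R M) :
    N.spanRank ≤ Module.rank (R ⧸ Ideal.span {a}) (N ⧸ (Ideal.span {a} • ⊤ : Submodule R N)) +
      (a • N).spanRank := by
  have hker : LinearMap.ker (LinearMap.lsmul R M a ∘ₗ N.subtype) = torsionBy R N a := by
    ext x
    exact (Subtype.ext_iff (a1 := a • x) (a2 := 0)).symm
  have hrange : LinearMap.range (LinearMap.lsmul R M a ∘ₗ N.subtype) = a • N := by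
    rw [LinearMap.range_comp, range_subtype]
    rfl
  have := isTorsionFree_torsionBy_submodule (a := a) N
  calc N.spanRank ≤ (torsionBy R N a).spanRank + (a • N).spanRank := by
        simpa only [spanRank_top, hker, hrange] using
          spanRank_top_le_spanRank_ker_add_spanRank_range (LinearMap.lsmul R M a ∘ₗ N.subtype)
    _ ≤ _ := by
        gcongr
        exact spanRank_torsionBy_le_rank.trans
          (rank_torsionBy_le_rank_quotient a N hs k fun x ↦ Subtype.ext (@h x))

theorem spanRank_top_le_sum_rank_add_spanRank_pow_smul {s : R} (hs : ¬a ∣ s) {k : ℕ}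
    (h : Module.IsTorsionBy R M (a ^ k * s)) (n : ℕ) :
    (⊤ : Submodule R M).spanRank ≤
      (Cardinal.sum fun i ↦ Module.rank (R ⧸ Ideal.span {a})
        ((a ^ i • ⊤ : Submodule R M) ⧸
          (Ideal.span {a} • ⊤ : Submodule R (a ^ i • ⊤ : Submodule R M)))) +
      (a ^ n • ⊤ : Submodule R M).spanRank := by
  have hstep (i : ℕ) := spanRank_le_rank_quotient_add_spanRank_smul hs h (a ^ i • ⊤)
  simp_rw [smul_smul, ← pow_succ'] at hstep
  simpa only [pow_zero, one_smul] using
    le_sum_add_of_le_add_succ (c := fun i ↦ (a ^ i • ⊤ : Submodule R M).spanRank) hstep n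

end SpanRank

section PowerSeries

variable {A : Type*} [CommRing A]

theorem powerSeries_ker_map_eq_span_C {B : Type*} [CommRing B] {f : A →+* B} {ϖ : A}
    (hf : RingHom.ker f = Ideal.span {ϖ}) :
    RingHom.ker (PowerSeries.map f) = Ideal.span {PowerSeries.C ϖ} := by
  ext g
  calc PowerSeries.map f g = 0 ↔ ∀ n, ϖ ∣ PowerSeries.coeff n g := by
        simp_rw [PowerSeries.ext_iff, PowerSeries.coeff_map, map_zero, ← RingHom.mem_ker, hf,
          Ideal.mem_span_singleton]
    _ ↔ PowerSeries.C ϖ ∣ g := by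
        refine ⟨fun h ↦ ?_, ?_⟩
        · choose c hc using h
          exact ⟨.mk c, PowerSeries.ext fun n ↦ by simp [hc]⟩
        · rintro ⟨c, rfl⟩ n
          simp
    _ ↔ g ∈ Ideal.span {PowerSeries.C ϖ} := Ideal.mem_span_singleton.symm

variable [IsLocalRing A] {ϖ : A}

theorem C_dvd_iff_map_residue_eq_zero (hϖ : maximalIdeal A = Ideal.span {ϖ}) (g : A⟦X⟧) :
    PowerSeries.C ϖ ∣ g ↔ g.map (residue A) = 0 := by
  rw [← Ideal.mem_span_singleton, ← powerSeries_ker_map_eq_span_C (ker_residue.trans hϖ),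
    RingHom.mem_ker]

/-- The isomorphism `A⟦X⟧ / (ϖ) ≅ k⟦X⟧` for a local ring `A` with residue field `k` and maximal
ideal `(ϖ)`. -/
noncomputable def quotientSpanCEquiv (hϖ : maximalIdeal A = Ideal.span {ϖ}) :
    A⟦X⟧ ⧸ Ideal.span {PowerSeries.C ϖ} ≃+* (ResidueField A)⟦X⟧ :=
  (Ideal.quotEquivOfEq
      (powerSeries_ker_map_eq_span_C (ker_residue.trans hϖ)).symm).trans
    (RingHom.quotientKerEquivOfSurjective
      (PowerSeries.map_surjective (residue A) residue_surjective))

theorem isDomain_quotient_span_C (hϖ : maximalIdeal A = Ideal.span {ϖ}) :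
    IsDomain (A⟦X⟧ ⧸ Ideal.span {PowerSeries.C ϖ}) :=
  (quotientSpanCEquiv hϖ).toMulEquiv.isDomain _

theorem isPrincipalIdealRing_quotient_span_C (hϖ : maximalIdeal A = Ideal.span {ϖ}) :
    IsPrincipalIdealRing (A⟦X⟧ ⧸ Ideal.span {PowerSeries.C ϖ}) :=
  .of_surjective (quotientSpanCEquiv hϖ).symm (quotientSpanCEquiv hϖ).symm.surjective

variable [IsAdicComplete (maximalIdeal A) A]

theorem finite_quotient_span_of_map_residue_ne_zero {s : A⟦X⟧} (hs : s.map (residue A) ≠ 0) :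
    Module.Finite A (A⟦X⟧ ⧸ Ideal.span {s}) := by
  let n := (s.map (residue A)).order.toNat
  let toQuotient : Polynomial.degreeLT A n →ₗ[A] A⟦X⟧ ⧸ Ideal.span {s} :=
    (Ideal.Quotient.mkₐ A (Ideal.span {s})).toLinearMap ∘ₗ
      (Polynomial.coeToPowerSeries.algHom A).toLinearMap ∘ₗ (Polynomial.degreeLT A n).subtype
  have : Module.Finite A (Polynomial.degreeLT A n) := .equiv (Polynomial.degreeLTEquiv A n).symm
  refine .of_surjective toQuotient (Ideal.Quotient.mk_surjective.forall.2 fun f ↦ ?_)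
  obtain ⟨q, r, h⟩ := PowerSeries.exists_isWeierstrassDivision f hs
  refine ⟨⟨r, Polynomial.mem_degreeLT.2 h.degree_lt⟩, ?_⟩
  change Ideal.Quotient.mk _ (Polynomial.coeToPowerSeries.algHom A r) = _
  rw [Ideal.Quotient.eq, h.eq_mul_add, Polynomial.coeToPowerSeries.algHom_apply]
  simpa using Ideal.mul_mem_right q _ (Ideal.mem_span_singleton_self s)

variable {M : Type*} [AddCommGroup M] [Module A⟦X⟧ M] [Module A M] [IsScalarTower A A⟦X⟧ M]

theorem finite_of_isTorsionBy_of_not_C_dvd [Module.Finite A⟦X⟧ M]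
    (hϖ : maximalIdeal A = Ideal.span {ϖ}) {s : A⟦X⟧} (hs : ¬PowerSeries.C ϖ ∣ s)
    (h : Module.IsTorsionBy A⟦X⟧ M s) : Module.Finite A M := by
  have := finite_quotient_span_of_map_residue_ne_zero
    ((C_dvd_iff_map_residue_eq_zero hϖ s).not.1 hs)
  exact finite_of_isTorsionBySet ((Module.isTorsionBySet_span_singleton_iff s).2 h)

theorem isTorsionFree_torsionBy_C_of_finite_eq_bot [Finite (ResidueField A)]
    (hϖ : maximalIdeal A = Ideal.span {ϖ})
    (hfin : ∀ N : Submodule A⟦X⟧ M, (N : Set M).Finite → N = ⊥) :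
    Module.IsTorsionFree (A⟦X⟧ ⧸ Ideal.span {PowerSeries.C ϖ})
      (torsionBy A⟦X⟧ M (PowerSeries.C ϖ)) := by
  have := isDomain_quotient_span_C hϖ
  refine .of_smul_eq_zero (Ideal.Quotient.mk_surjective.forall.2 fun s x hsx ↦ ?_)
  rw [or_iff_not_imp_left, Ideal.Quotient.eq_zero_iff_mem, Ideal.mem_span_singleton]
  intro hs
  have hspan {r : A⟦X⟧} (hr : r • (x : M) = 0) :
      Module.IsTorsionBy A⟦X⟧ (span A⟦X⟧ {(x : M)}) r := by
    rintro ⟨y, hy⟩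
    obtain ⟨c, rfl⟩ := mem_span_singleton.1 hy
    ext
    simp [smul_comm r c, hr]
  have := finite_of_isTorsionBy_of_not_C_dvd hϖ hs (hspan (congrArg Subtype.val hsx))
  have htors : Module.IsTorsionBySet A (span A⟦X⟧ {(x : M)}) (maximalIdeal A) := by
    rw [hϖ, Module.isTorsionBySet_span_singleton_iff]
    intro y
    rw [← algebraMap_smul A⟦X⟧ ϖ y]
    exact @hspan _ x.2 y
  have : Finite (A ⧸ maximalIdeal A) := ‹Finite (ResidueField A)›
  have : Finite (span A⟦X⟧ {(x : M)}) := finite_of_isTorsionBySet_of_finite_quotient htors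
  exact Subtype.ext (span_singleton_eq_bot.1 (hfin _ (Set.toFinite _)))

end PowerSeries

section CompleteDVR

variable {A : Type*} [CommRing A] [IsDomain A] [IsDiscreteValuationRing A]
  [IsAdicComplete (maximalIdeal A) A] {ϖ : A} {M : Type*} [AddCommGroup M] [Module A⟦X⟧ M]
  [Module A M] [IsScalarTower A A⟦X⟧ M] [Module.Finite A⟦X⟧ M]

theorem spanRank_pow_smul_top_le_rank (hϖ : Irreducible ϖ) {s : A⟦X⟧}
    (hs : ¬PowerSeries.C ϖ ∣ s) {k : ℕ} (h : Module.IsTorsionBy A⟦X⟧ M (PowerSeries.C ϖ ^ k * s))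
    [Module.IsTorsionFree (A⟦X⟧ ⧸ Ideal.span {PowerSeries.C ϖ})
      (torsionBy A⟦X⟧ M (PowerSeries.C ϖ))] :
    (PowerSeries.C ϖ ^ k • ⊤ : Submodule A⟦X⟧ M).spanRank ≤ Module.rank A M := by
  have := isDomain_quotient_span_C hϖ.maximalIdeal_eq
  let N : Submodule A⟦X⟧ M := PowerSeries.C ϖ ^ k • ⊤
  have hN : Module.IsTorsionBy A⟦X⟧ N s := by
    rintro ⟨_, y, -, rfl⟩
    ext
    simpa [smul_smul, mul_comm] using @h y
  have : Module.Finite A N := finite_of_isTorsionBy_of_not_C_dvd hϖ.maximalIdeal_eq hs hN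
  have := isTorsionFree_torsionBy_submodule (a := PowerSeries.C ϖ) N
  have hreg : IsSMulRegular N (PowerSeries.C ϖ) := isSMulRegular_of_isTorsionBy_of_not_dvd hs hN
  have : Module.IsTorsionFree A N := isTorsionFree_of_isSMulRegular_irreducible hϖ
    ((isSMulRegular_algebraMap_iff A⟦X⟧).1 hreg)
  calc N.spanRank = (⊤ : Submodule A⟦X⟧ N).spanRank := N.spanRank_top.symm
    _ ≤ Module.rank A N := spanRank_top_le_rank
    _ ≤ Module.rank A M :=
        LinearMap.rank_le_of_injective (N.subtype.restrictScalars A) Subtype.val_injective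

/-- The sum is `μ(M)` and `Module.rank A M` is `λ(M)`; by Nakayama's lemma the minimal number of
generators of `M` is `g(M)`. -/
theorem mu_add_lambda_ge_g_general [Finite (ResidueField A)] (hϖ : Irreducible ϖ)
    (htors : Module.IsTorsion A⟦X⟧ M)
    (hfin : ∀ N : Submodule A⟦X⟧ M, (N : Set M).Finite → N = ⊥) :
    (⊤ : Submodule A⟦X⟧ M).spanRank ≤
      (Cardinal.sum fun i ↦ Module.rank (A⟦X⟧ ⧸ Ideal.span {PowerSeries.C ϖ})
        ((PowerSeries.C ϖ ^ i • ⊤ : Submodule A⟦X⟧ M) ⧸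
          (Ideal.span {PowerSeries.C ϖ} •
            ⊤ : Submodule A⟦X⟧ (PowerSeries.C ϖ ^ i • ⊤ : Submodule A⟦X⟧ M)))) +
      Module.rank A M := by
  have := isDomain_quotient_span_C hϖ.maximalIdeal_eq
  have := isPrincipalIdealRing_quotient_span_C hϖ.maximalIdeal_eq
  have := isTorsionFree_torsionBy_C_of_finite_eq_bot hϖ.maximalIdeal_eq hfin
  have hunit : ¬IsUnit (PowerSeries.C ϖ) := by
    simpa [PowerSeries.isUnit_iff_constantCoeff] using hϖ.not_isUnit
  obtain ⟨k, s, hs, h⟩ := exists_isTorsionBy_pow_mul htors hunit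
  grw [spanRank_top_le_sum_rank_add_spanRank_pow_smul hs h k, spanRank_pow_smul_top_le_rank hϖ hs h]

end CompleteDVR

section Iwasawa

variable (p : ℕ) [Fact p.Prime] (X : Type) [AddCommGroup X]

theorem maxIdeal_ne_top : maxIdeal p ≠ ⊤ := by
  have hle : maxIdeal p ≤ maximalIdeal (IwasawaAlgebra p) := by
    simp [maxIdeal, Ideal.span_le, Set.pair_subset_iff, PowerSeries.isUnit_iff_constantCoeff,
      PadicInt.irreducible_p.not_isUnit]
  exact ne_top_of_le_ne_top (maximalIdeal.isMaximal _).ne_top hle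

theorem gInv_le_spanRank [Module (IwasawaAlgebra p) X] :
    gInv p X ≤ (⊤ : Submodule (IwasawaAlgebra p) X).spanRank :=
  have := Ideal.Quotient.nontrivial_iff.2 (maxIdeal_ne_top p)
  rank_quotient_smul_top_le_spanRank (maxIdeal p) X

theorem lambdaInv_eq_rank [Module ℤ_[p] X] : lambdaInv p X = Module.rank ℤ_[p] X :=
  rank_tensorProduct_of_isFractionRing ℤ_[p] ℚ_[p] X

theorem muInv_eq_sum_rank [Module (IwasawaAlgebra p) X] :
    muInv p X = Cardinal.sum fun i ↦
      Module.rank (ℤ_[p]⟦X⟧ ⧸ Ideal.span {PowerSeries.C (p : ℤ_[p])})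
        ((PowerSeries.C (p : ℤ_[p]) ^ i • ⊤ : Submodule ℤ_[p]⟦X⟧ X) ⧸
          (Ideal.span {PowerSeries.C (p : ℤ_[p])} • ⊤ :
            Submodule ℤ_[p]⟦X⟧ (PowerSeries.C (p : ℤ_[p]) ^ i • ⊤ : Submodule ℤ_[p]⟦X⟧ X))) := by
  have hC : PowerSeries.C (p : ℤ_[p]) = (p : IwasawaAlgebra p) := map_natCast _ p
  have hdom := isDomain_quotient_span_C (PadicInt.maximalIdeal_eq_span_p (p := p))
  rw [hC] at hdom
  rw [hC, muInv]
  simp_rw [rank_tensorProduct_of_isFractionRing]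
  rfl

end Iwasawa

theorem mu_add_lambda_ge_g (p : ℕ) [Fact p.Prime] (hp : Odd p)
    (X : Type) [AddCommGroup X] [Module (IwasawaAlgebra p) X]
    [Module ℤ_[p] X] [IsScalarTower ℤ_[p] (IwasawaAlgebra p) X]
    [Module.Finite (IwasawaAlgebra p) X]
    (htors : Module.IsTorsion (IwasawaAlgebra p) X)
    (hfin : ∀ N : Submodule (IwasawaAlgebra p) X, (N : Set X).Finite → N = ⊥) :
    gInv p X ≤ muInv p X + lambdaInv p X := by
  rw [muInv_eq_sum_rank, lambdaInv_eq_rank]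
  exact (gInv_le_spanRank p X).trans
    (mu_add_lambda_ge_g_general PadicInt.irreducible_p htors hfin)
end

section
/- Let p be an odd prime, Λ = ℤ_p⟦T⟧, and 𝔐 = (p, T) its maximal ideal. Let X be a finitely generated Λ-module that is annihilated by p^n for some n ≥ 1 and contains no nonzero finite Λ-submodules. Then μ(X) ≥ dim_{𝔽_p}(X/𝔐X), where μ(X) = Σ_{i=0}^∞ rank_{𝔽_p⟦T⟧}(p^i X / p^{i+1} X). -/
open Pointwise TensorProduct

set_option synthInstance.maxHeartbeats 1000000
set_option maxHeartbeats 1000000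

/-!
`X[T]` is finitely generated and killed by `p ^ n` and `T`, hence finite, hence zero, so `T` is
`X`-regular. Over the principal ideal domain `Ω = Λ/p`, the Euler characteristic
`χ(Q) = length (Q / TQ) - length Q[T]` is the rank of `Q`, because it is additive on a presentation
`0 → K → Ω ^ m → Q → 0` and `K` is free. Lengths over `Ω` and over `Λ` agree, so additivity of `χ`
on `0 → p ^ (i + 1) X → p ^ i X → p ^ i X / p ^ (i + 1) X → 0` telescopes to
`length (X / TX) = μ(X)`, and `X / 𝔐X` is a quotient of `X / TX`.
-/

section EulerCharacteristic

variable {R : Type*} [CommRing R]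

theorem length_add_length_eq_of_exact {A B C D : Type*} [AddCommGroup A] [Module R A]
    [AddCommGroup B] [Module R B] [AddCommGroup C] [Module R C] [AddCommGroup D] [Module R D]
    {f : A →ₗ[R] B} {g : B →ₗ[R] C} {h : C →ₗ[R] D} (hf : Function.Injective f)
    (hfg : Function.Exact f g) (hgh : Function.Exact g h) (hh : Function.Surjective h) :
    Module.length R A + Module.length R C = Module.length R B + Module.length R D := by
  have hB : Module.length R B = Module.length R A + Module.length R g.range :=
    Module.length_eq_add_of_exact f g.rangeRestrict hf g.surjective_rangeRestrict
      fun y ↦ by rw [← hfg y, Subtype.ext_iff]; rfl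
  have hC : Module.length R C = Module.length R g.range + Module.length R D :=
    Module.length_eq_add_of_exact g.range.subtype h g.range.subtype_injective hh
      fun y ↦ by rw [hgh y]; simp
  rw [hB, hC, add_assoc]

section ConnectingHom

variable {N M Q : Type*} [AddCommGroup N] [Module R N] [AddCommGroup M] [Module R M]
  [AddCommGroup Q] [Module R Q] (t : R)

theorem exact_lsmul_mkQ (M : Type*) [AddCommGroup M] [Module R M] :
    Function.Exact (LinearMap.lsmul R M t) (t • (⊤ : Submodule R M)).mkQ := fun y ↦ by
  simp [Submodule.mem_smul_pointwise_iff_exists]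

variable {f : N →ₗ[R] M} {g : M →ₗ[R] Q} (hf : Function.Injective f)
  (hfg : Function.Exact f g) (hg : Function.Surjective g)

/-- The connecting homomorphism `Q[t] → N / tN` of the snake lemma, for multiplication by `t` on
the short exact sequence `0 → N → M → Q → 0`. -/
noncomputable def torsionByConnecting : Submodule.torsionBy R Q t →ₗ[R] QuotSMulTop t N :=
  SnakeLemma.δ' (LinearMap.lsmul R N t) (LinearMap.lsmul R M t) (LinearMap.lsmul R Q t)
    f g hfg f g hfg (by ext; simp) (by ext; simp) (Submodule.torsionBy R Q t).subtype
    (LinearMap.exact_subtype_ker_map _) (t • ⊤ : Submodule R N).mkQ (exact_lsmul_mkQ t N) hg hf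

theorem torsionByConnecting_injective (ht : IsSMulRegular M t) :
    Function.Injective (torsionByConnecting t hf hfg hg) := by
  have hM : Function.Exact (0 : PUnit →ₗ[R] M) (LinearMap.lsmul R M t) :=
    (LinearMap.exact_zero_iff_injective PUnit _).mpr ht
  exact (LinearMap.exact_zero_iff_injective PUnit _).mp <|
    SnakeLemma.exact_δ'_right _ _ _ _ _ _ _ _ _ _ _ 0 hM _ _ _ _ _ _ _ (by simp)
      (Submodule.subtype_injective _)

theorem exact_torsionByConnecting_map :
    Function.Exact (torsionByConnecting t hf hfg hg) (QuotSMulTop.map t f) :=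
  SnakeLemma.exact_δ'_left _ _ _ _ _ _ _ _ _ _ _ _ _ _ _ _ (exact_lsmul_mkQ t M) _ _ _
    (QuotSMulTop.map_comp_mkQ t f) (Submodule.mkQ_surjective _)

include hf hfg hg in
/-- Additivity of the Euler characteristic `length (M / tM) - length M[t]`, where `M[t] = N[t] = 0`,
with terms moved so that no subtraction in `ℕ∞` occurs. -/
theorem length_torsionBy_add_length_quotSMulTop (ht : IsSMulRegular M t) :
    Module.length R (Submodule.torsionBy R Q t) + Module.length R (QuotSMulTop t M) =
      Module.length R (QuotSMulTop t N) + Module.length R (QuotSMulTop t Q) :=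
  length_add_length_eq_of_exact (torsionByConnecting_injective t hf hfg hg ht)
    (exact_torsionByConnecting_map t hf hfg hg) (QuotSMulTop.map_exact t hfg hg)
    (QuotSMulTop.map_surjective t hg)

end ConnectingHom

theorem length_quotSMulTop_of_free (t : R)
    [IsSimpleModule R (R ⧸ Ideal.span {t})]
    (M : Type*) [AddCommGroup M] [Module R M] [Module.Free R M] [Module.Finite R M] :
    Module.length R (QuotSMulTop t M) = Module.finrank R M := by
  have : Nontrivial (R ⧸ Ideal.span {t}) := IsSimpleModule.nontrivial R _
  have : Nontrivial R := (Ideal.Quotient.mk_surjective (I := Ideal.span {t})).nontrivial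
  rw [((QuotSMulTop.congr t (Module.finBasis R M).equivFun).trans
    ((QuotSMulTop.equivQuotTensor t _).trans
      (TensorProduct.piScalarRight R R (R ⧸ Ideal.span {t}) _))).length_eq]
  simp

section PrincipalIdealRing

variable [IsDomain R] [IsPrincipalIdealRing R] {t : R} (ht : t ≠ 0)
  [IsSimpleModule R (R ⧸ Ideal.span {t})] (Q : Type*) [AddCommGroup Q] [Module R Q]
  [Module.Finite R Q]

include ht

theorem length_quotSMulTop_eq_length_torsionBy_add_finrank :
    Module.length R (QuotSMulTop t Q) =
      Module.length R (Submodule.torsionBy R Q t) + Module.finrank R Q := by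
  obtain ⟨m, π, hπ⟩ := Module.Finite.exists_fin' R Q
  have hrank : Module.finrank R Q + Module.finrank R π.ker = Module.finrank R (Fin m → R) := by
    rw [← (π.quotKerEquivOfSurjective hπ).finrank_eq, Submodule.finrank_quotient_add_finrank]
  have hχ := length_torsionBy_add_length_quotSMulTop t π.ker.subtype_injective
    (LinearMap.exact_subtype_ker_map π) hπ (smul_right_injective (Fin m → R) ht)
  rw [length_quotSMulTop_of_free, length_quotSMulTop_of_free, ← hrank, Nat.cast_add, ← add_assoc,
    add_comm] at hχ
  exact (WithTop.add_left_cancel (ENat.natCast_ne_top _) hχ).symm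

theorem length_torsionBy_ne_top : Module.length R (Submodule.torsionBy R Q t) ≠ ⊤ := by
  obtain ⟨m, π, hπ⟩ := Module.Finite.exists_fin' R Q
  refine ne_top_of_le_ne_top ?_ <| Module.length_le_of_injective _ <|
    torsionByConnecting_injective t π.ker.subtype_injective (LinearMap.exact_subtype_ker_map π) hπ
      (smul_right_injective (Fin m → R) ht)
  rw [length_quotSMulTop_of_free]
  exact ENat.natCast_ne_top _

end PrincipalIdealRing

end EulerCharacteristic

section ChangeOfRings

variable {S R Q : Type*} [CommRing S] [CommRing R] [Algebra S R] [AddCommGroup Q] [Module S Q]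
  [Module R Q] [IsScalarTower S R Q]

theorem length_quotSMulTop_algebraMap (h : Function.Surjective (algebraMap S R)) (s : S) :
    Module.length R (QuotSMulTop (algebraMap S R s) Q) = Module.length S (QuotSMulTop s Q) := by
  have hs : s • (⊤ : Submodule S Q) =
      (algebraMap S R s • (⊤ : Submodule R Q)).restrictScalars S := by
    ext
    simp [Submodule.mem_smul_pointwise_iff_exists]
  rw [← Module.length_eq_of_surjective (S := S) h]
  exact (Submodule.quotEquivOfEq _ _ hs ≪≫ₗ
    Submodule.Quotient.restrictScalarsEquiv S _).symm.length_eq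

theorem length_torsionBy_algebraMap (h : Function.Surjective (algebraMap S R)) (s : S) :
    Module.length R (Submodule.torsionBy R Q (algebraMap S R s)) =
      Module.length S (Submodule.torsionBy S Q s) := by
  have hs : Submodule.torsionBy S Q s =
      (Submodule.torsionBy R Q (algebraMap S R s)).restrictScalars S := by
    ext
    simp
  rw [← Module.length_eq_of_surjective (S := S) h]
  exact (LinearEquiv.ofEq _ _ hs).symm.length_eq

end ChangeOfRings

section PowerFiltration

variable {R : Type*} [CommRing R] {a t : R}

theorem isSimpleModule_quotient_span_mk [(Ideal.span {a, t}).IsMaximal] :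
    IsSimpleModule (R ⧸ Ideal.span {a})
      ((R ⧸ Ideal.span {a}) ⧸ Ideal.span {Ideal.Quotient.mk (Ideal.span {a}) t}) := by
  have hspan : (Ideal.span {a, t}).map (Ideal.Quotient.mk (Ideal.span {a})) =
      Ideal.span {Ideal.Quotient.mk (Ideal.span {a}) t} := by
    rw [Ideal.map_span, Set.image_pair, Ideal.Quotient.mk_singleton_self, Ideal.span_insert_zero]
  rw [isSimpleModule_iff_isCoatom, ← Ideal.isMaximal_def, ← hspan]
  refine Ideal.IsMaximal.map_of_surjective_of_ker_le Ideal.Quotient.mk_surjective ?_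
  rw [Ideal.mk_ker]
  exact Ideal.span_mono (by simp)

variable {M : Type*} [AddCommGroup M] [Module R M]

theorem length_quotSMulTop_eq_add_finrank [IsDomain (R ⧸ Ideal.span {a})]
    [IsPrincipalIdealRing (R ⧸ Ideal.span {a})] [(Ideal.span {a, t}).IsMaximal] (hat : ¬a ∣ t)
    [Module.Finite R M] (ht : IsSMulRegular M t) :
    Module.length R (QuotSMulTop t M) =
      Module.length R (QuotSMulTop t ↥(Ideal.span {a} • (⊤ : Submodule R M))) +
        Module.finrank (R ⧸ Ideal.span {a}) (M ⧸ (Ideal.span {a} • (⊤ : Submodule R M))) := by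
  set I := Ideal.span {a}
  let Q := M ⧸ (I • (⊤ : Submodule R M))
  have hsurj : Function.Surjective (algebraMap R (R ⧸ I)) := Ideal.Quotient.mk_surjective
  have ht₀ : algebraMap R (R ⧸ I) t ≠ 0 := fun h ↦
    hat (Ideal.mem_span_singleton.mp (Ideal.Quotient.eq_zero_iff_mem.mp h))
  have : IsSimpleModule (R ⧸ I) ((R ⧸ I) ⧸ Ideal.span {algebraMap R (R ⧸ I) t}) :=
    isSimpleModule_quotient_span_mk
  have : Module.Finite (R ⧸ I) Q := Module.Finite.of_restrictScalars_finite R _ _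
  have hQ : Module.length R (QuotSMulTop t Q) =
      Module.length R (Submodule.torsionBy R Q t) + Module.finrank (R ⧸ I) Q := by
    rw [← length_quotSMulTop_algebraMap hsurj, ← length_torsionBy_algebraMap hsurj,
      length_quotSMulTop_eq_length_torsionBy_add_finrank ht₀]
  have hQ_fin : Module.length R (Submodule.torsionBy R Q t) ≠ ⊤ := by
    rw [← length_torsionBy_algebraMap hsurj]
    exact length_torsionBy_ne_top ht₀ Q
  have hχ := length_torsionBy_add_length_quotSMulTop t (Submodule.subtype_injective _)
    (LinearMap.exact_subtype_mkQ (I • (⊤ : Submodule R M))) (Submodule.mkQ_surjective _) ht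
  rw [hQ, add_left_comm] at hχ
  exact WithTop.add_left_cancel hQ_fin hχ

/-- The isomorphism between `a (a ^ i M)`, as a submodule of `a ^ i M`, and `a ^ (i + 1) M`, as a
submodule of `M`. -/
noncomputable def spanSMulTopEquivPowSuccSMul (a : R) (M : Type*) [AddCommGroup M] [Module R M]
    (i : ℕ) :
    ↥(Ideal.span {a} • (⊤ : Submodule R ↥(a ^ i • (⊤ : Submodule R M)))) ≃ₗ[R]
      ↥(a ^ (i + 1) • (⊤ : Submodule R M)) :=
  Submodule.equivSubtypeMap _ _ ≪≫ₗ LinearEquiv.ofEq _ _ (by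
    rw [Submodule.map_smul'', Submodule.map_subtype_top, Submodule.ideal_span_singleton_smul,
      smul_smul, pow_succ'])

theorem finite_smul_top (a : R) (M : Type*) [AddCommGroup M] [Module R M] [Module.Finite R M] :
    Module.Finite R ↥(a • (⊤ : Submodule R M)) :=
  Module.Finite.iff_fg.mpr (Module.Finite.fg_top.map (DistribSMul.toLinearMap R M a))

theorem pow_smul_top_eq_bot {n i : ℕ} (hann : Module.IsTorsionBy R M (a ^ n)) (hi : n ≤ i) :
    (a ^ i • ⊤ : Submodule R M) = ⊥ := by
  refine eq_bot_iff.mpr ?_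
  rintro _ ⟨x, -, rfl⟩
  obtain ⟨j, rfl⟩ := Nat.exists_eq_add_of_le' hi
  simp [pow_add, mul_smul, hann (x := x)]

theorem length_quotSMulTop_eq_sum_finrank [IsDomain (R ⧸ Ideal.span {a})]
    [IsPrincipalIdealRing (R ⧸ Ideal.span {a})] [(Ideal.span {a, t}).IsMaximal] (hat : ¬a ∣ t)
    [Module.Finite R M] (ht : IsSMulRegular M t) {n : ℕ} (hann : Module.IsTorsionBy R M (a ^ n)) :
    Module.length R (QuotSMulTop t M) =
      ∑ i ∈ Finset.range n, Module.finrank (R ⧸ Ideal.span {a})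
        (↥(a ^ i • (⊤ : Submodule R M)) ⧸
          (Ideal.span {a} • (⊤ : Submodule R ↥(a ^ i • (⊤ : Submodule R M))))) := by
  let F (i : ℕ) : Submodule R M := a ^ i • ⊤
  have (i : ℕ) : Module.Finite R (F i) := finite_smul_top (a ^ i) M
  let r (i : ℕ) : ℕ := Module.finrank (R ⧸ Ideal.span {a})
    (F i ⧸ (Ideal.span {a} • (⊤ : Submodule R (F i))))
  have hstep (i : ℕ) : Module.length R (QuotSMulTop t (F i)) =
      Module.length R (QuotSMulTop t (F (i + 1))) + r i := by
    rw [length_quotSMulTop_eq_add_finrank hat (ht.submodule (F i)),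
      (QuotSMulTop.congr t (spanSMulTopEquivPowSuccSMul a M i)).length_eq]
  have hsum (k : ℕ) : Module.length R (QuotSMulTop t (F 0)) =
      Module.length R (QuotSMulTop t (F k)) + ∑ i ∈ Finset.range k, r i := by
    induction k with
    | zero => simp
    | succ k ih =>
      rw [ih, hstep, Finset.sum_range_succ, Nat.cast_add, add_assoc, add_comm (r k : ℕ∞)]
  have hzero : F 0 = ⊤ := by simp [F]
  have : Subsingleton (F n) :=
    Submodule.subsingleton_iff_eq_bot.mpr (pow_smul_top_eq_bot hann le_rfl)
  rw [← (QuotSMulTop.congr t (LinearEquiv.ofTop _ hzero)).length_eq, hsum n,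
    Module.length_eq_zero, zero_add, Nat.cast_sum]

theorem toENat_rank_quotient_le_length_quotSMulTop (I : Ideal R) [I.IsMaximal] (htI : t ∈ I)
    (M : Type*) [AddCommGroup M] [Module R M] :
    Cardinal.toENat (Module.rank (R ⧸ I) (M ⧸ (I • (⊤ : Submodule R M)))) ≤
      Module.length R (QuotSMulTop t M) := by
  let := Ideal.Quotient.field I
  have hle : t • (⊤ : Submodule R M) ≤ I • ⊤ := by
    rw [← Submodule.ideal_span_singleton_smul]
    exact Submodule.smul_mono_left ((Ideal.span_singleton_le_iff_mem I).mpr htI)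
  rw [← Module.length_eq_rank,
    ← Module.length_eq_of_surjective (S := R) Ideal.Quotient.mk_surjective]
  exact Module.length_le_of_surjective (Submodule.factor hle) (Submodule.factor_surjective hle)

theorem finite_of_isTorsionBySet_s1 (I : Ideal R) [Finite (R ⧸ I)] [Module.Finite R M]
    (h : Module.IsTorsionBySet R M I) : Finite M := by
  let := h.module
  have : IsScalarTower R (R ⧸ I) M := h.isScalarTower
  have : Module.Finite (R ⧸ I) M := Module.Finite.of_restrictScalars_finite R _ _
  exact Module.finite_of_finite (R ⧸ I)

theorem finite_of_isTorsionBy_pow [Finite (R ⧸ Ideal.span {a, t})] [Module.Finite R M] {m n : ℕ}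
    (ha : Module.IsTorsionBy R M (a ^ m)) (ht : Module.IsTorsionBy R M (t ^ n)) : Finite M := by
  have : Finite (R ⧸ Ideal.span {a, t} ^ (m + n)) :=
    Ideal.finite_quotient_pow (Submodule.fg_span (by simp)) _
  have hle : Ideal.span {a, t} ^ (m + n) ≤ Module.annihilator R M := calc
    Ideal.span {a, t} ^ (m + n) ≤ Ideal.span {a} ^ m ⊔ Ideal.span {t} ^ n := by
      rw [Ideal.span_insert]
      exact Ideal.sup_pow_add_le_pow_sup_pow
    _ ≤ Module.annihilator R M := by
      simp only [Ideal.span_singleton_pow, sup_le_iff, Ideal.span_singleton_le_iff_mem,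
        Module.mem_annihilator]
      exact ⟨@ha, @ht⟩
  exact finite_of_isTorsionBySet_s1 _ (Module.isTorsionBySet_iff_subset_annihilator R M |>.mpr hle)

theorem isSMulRegular_of_finite_submodule_eq_bot [Finite (R ⧸ Ideal.span {a, t})]
    [IsNoetherian R M] {n : ℕ} (hann : Module.IsTorsionBy R M (a ^ n))
    (hfin : ∀ N : Submodule R M, (N : Set M).Finite → N = ⊥) : IsSMulRegular M t := by
  have : Finite (Submodule.torsionBy R M t) :=
    finite_of_isTorsionBy_pow (a := a) (t := t) (m := n) (n := 1)
      (fun _ ↦ Subtype.ext (@hann _)) (by simp)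
  exact (isSMulRegular_iff_torsionBy_eq_bot M t).mpr (hfin _ (Set.toFinite _))

end PowerFiltration

section PowerSeries

variable {A B : Type*} [CommRing A] [CommRing B] {f : A →+* B} {a : A}

theorem ker_powerSeriesMap_eq_span_C (h : RingHom.ker f = Ideal.span {a}) :
    RingHom.ker (PowerSeries.map f) = Ideal.span {PowerSeries.C a} := by
  ext φ
  have hcoeff : φ ∈ RingHom.ker (PowerSeries.map f) ↔ ∀ k, a ∣ PowerSeries.coeff k φ := by
    simp_rw [← Ideal.mem_span_singleton, ← h, RingHom.mem_ker, PowerSeries.ext_iff,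
      PowerSeries.coeff_map, map_zero]
  rw [hcoeff, Ideal.mem_span_singleton]
  refine ⟨fun hφ ↦ ?_, ?_⟩
  · choose ψ hψ using hφ
    exact ⟨PowerSeries.mk ψ, PowerSeries.ext fun k ↦ by simp [hψ]⟩
  · rintro ⟨ψ, rfl⟩ k
    simp

theorem ker_comp_constantCoeff_eq_span (h : RingHom.ker f = Ideal.span {a}) :
    RingHom.ker (f.comp PowerSeries.constantCoeff) =
      Ideal.span {PowerSeries.C a, PowerSeries.X} := by
  rw [Set.pair_comm, ← Set.image_singleton (f := PowerSeries.C)]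
  refine PowerSeries.eq_span_insert_X_of_X_mem_of_span_eq (by simp [RingHom.mem_ker]) ?_
  rw [← RingHom.comap_ker, Ideal.map_comap_of_surjective _ PowerSeries.constantCoeff_surj, h]

end PowerSeries

theorem rank_fractionRing_tensorProduct_eq_finrank (A Q : Type*) [CommRing A] [IsDomain A]
    [AddCommGroup Q] [Module A Q] [Module.Finite A Q] :
    Module.rank (FractionRing A) (FractionRing A ⊗[A] Q) = Module.finrank A Q := by
  rw [← (TensorProduct.isBaseChange A Q (FractionRing A)).finrank_eq, Module.finrank_eq_rank]

theorem cardinalSum_eq_sum_range {f : ℕ → Cardinal} {n : ℕ} (hf : ∀ i, n ≤ i → f i = 0) :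
    Cardinal.sum f = ∑ i ∈ Finset.range n, f i := by
  induction n generalizing f with
  | zero => simp [funext fun i ↦ hf i i.zero_le]
  | succ n ih =>
    rw [Cardinal.sum_nat_eq_add_sum_succ, Finset.sum_range_succ', add_comm,
      ih fun i hi ↦ hf (i + 1) (Nat.succ_le_succ hi)]

section IwasawaAlgebra

variable (p : ℕ) [Fact p.Prime]

theorem ker_toZMod_eq_span : RingHom.ker (PadicInt.toZMod (p := p)) = Ideal.span {(p : ℤ_[p])} :=
  PadicInt.ker_toZMod.trans PadicInt.maximalIdeal_eq_span_p

theorem ker_map_toZMod :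
    RingHom.ker (PowerSeries.map (PadicInt.toZMod (p := p))) =
      Ideal.span {(p : IwasawaAlgebra p)} := by
  rw [ker_powerSeriesMap_eq_span_C (ker_toZMod_eq_span p), map_natCast]

theorem ker_toZMod_comp_constantCoeff :
    RingHom.ker ((PadicInt.toZMod (p := p)).comp PowerSeries.constantCoeff) = maxIdeal p := by
  rw [ker_comp_constantCoeff_eq_span (ker_toZMod_eq_span p), map_natCast, maxIdeal]

/-- The isomorphism `Λ/pΛ ≅ 𝔽_p⟦T⟧` given by reducing the coefficients modulo `p`. -/
noncomputable def omegaEquiv : OmegaAlgebra p ≃+* PowerSeries (ZMod p) :=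
  (Ideal.quotEquivOfEq (ker_map_toZMod p).symm).trans <|
    RingHom.quotientKerEquivOfSurjective <|
      PowerSeries.map_surjective _ (ZMod.ringHom_surjective _)

/-- The isomorphism `Λ/𝔐 ≅ 𝔽_p` given by reducing the constant coefficient modulo `p`. -/
noncomputable def residueFieldEquiv : (IwasawaAlgebra p ⧸ maxIdeal p) ≃+* ZMod p :=
  (Ideal.quotEquivOfEq (ker_toZMod_comp_constantCoeff p).symm).trans <|
    RingHom.quotientKerEquivOfSurjective (ZMod.ringHom_surjective _)

instance : IsDomain (OmegaAlgebra p) :=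
  (omegaEquiv p).toMulEquiv.isDomain _

instance : IsPrincipalIdealRing (OmegaAlgebra p) :=
  IsPrincipalIdealRing.of_surjective (omegaEquiv p).symm.toRingHom (omegaEquiv p).symm.surjective

instance : (maxIdeal p).IsMaximal :=
  Ideal.Quotient.maximal_of_isField _ ((residueFieldEquiv p).toMulEquiv.isField (Field.toIsField _))

instance : Finite (IwasawaAlgebra p ⧸ maxIdeal p) :=
  Finite.of_equiv _ (residueFieldEquiv p).symm.toEquiv

theorem not_natCast_dvd_X : ¬(p : IwasawaAlgebra p) ∣ PowerSeries.X := by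
  rw [← Ideal.mem_span_singleton, ← ker_map_toZMod, RingHom.mem_ker, PowerSeries.map_X]
  exact PowerSeries.X_ne_zero

variable {X : Type} [AddCommGroup X] [Module (IwasawaAlgebra p) X]

theorem muInv_eq_sum_finrank [Module.Finite (IwasawaAlgebra p) X] {n : ℕ}
    (hann : Module.IsTorsionBy (IwasawaAlgebra p) X (p ^ n)) :
    muInv p X =
      (∑ i ∈ Finset.range n, Module.finrank (OmegaAlgebra p) (pGraded p X i) : ℕ) := by
  have (i : ℕ) : Module.Finite (IwasawaAlgebra p) (pPowSub p X i) :=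
    finite_smul_top ((p : IwasawaAlgebra p) ^ i) X
  have (i : ℕ) : Module.Finite (OmegaAlgebra p) (pGraded p X i) :=
    Module.Finite.of_restrictScalars_finite (IwasawaAlgebra p) _ _
  simp only [muInv, rank_fractionRing_tensorProduct_eq_finrank, Nat.cast_sum]
  refine cardinalSum_eq_sum_range fun i hi ↦ ?_
  have : Subsingleton (pPowSub p X i) :=
    Submodule.subsingleton_iff_eq_bot.mpr (pow_smul_top_eq_bot hann hi)
  rw [Module.finrank_zero_of_subsingleton, Nat.cast_zero]

end IwasawaAlgebra

theorem mu_ge_g_of_pPow_torsion_general (p : ℕ) [Fact p.Prime] (n : ℕ)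
    (X : Type) [AddCommGroup X] [Module (IwasawaAlgebra p) X] [Module.Finite (IwasawaAlgebra p) X]
    (hann : ∀ x : X, ((p : IwasawaAlgebra p) ^ n) • x = 0)
    (hfin : ∀ N : Submodule (IwasawaAlgebra p) X, (N : Set X).Finite → N = ⊥) :
    gInv p X ≤ muInv p X := by
  let T : IwasawaAlgebra p := PowerSeries.X
  have : (Ideal.span {(p : IwasawaAlgebra p), T}).IsMaximal :=
    inferInstanceAs (maxIdeal p).IsMaximal
  have : Finite (IwasawaAlgebra p ⧸ Ideal.span {(p : IwasawaAlgebra p), T}) :=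
    inferInstanceAs (Finite (IwasawaAlgebra p ⧸ maxIdeal p))
  have hT : IsSMulRegular X T := isSMulRegular_of_finite_submodule_eq_bot hann hfin
  rw [muInv_eq_sum_finrank p hann, ← Cardinal.toENat_le_natCast]
  calc
    Cardinal.toENat (gInv p X) ≤ Module.length (IwasawaAlgebra p) (QuotSMulTop T X) :=
      toENat_rank_quotient_le_length_quotSMulTop (maxIdeal p) (Ideal.subset_span (by simp [T])) X
    _ = (∑ i ∈ Finset.range n, Module.finrank (OmegaAlgebra p) (pGraded p X i) : ℕ) :=
      length_quotSMulTop_eq_sum_finrank (not_natCast_dvd_X p) hT hann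

theorem mu_ge_g_of_pPow_torsion (p : ℕ) [Fact p.Prime] (hp : Odd p)
    (n : ℕ) (hn : 1 ≤ n)
    (X : Type) [AddCommGroup X] [Module (IwasawaAlgebra p) X]
    [Module.Finite (IwasawaAlgebra p) X]
    (hann : ∀ x : X, ((p : IwasawaAlgebra p) ^ n) • x = 0)
    (hfin : ∀ N : Submodule (IwasawaAlgebra p) X, (N : Set X).Finite → N = ⊥) :
    gInv p X ≤ muInv p X := by
  exact mu_ge_g_of_pPow_torsion_general p n X hann hfin
end
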